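/- Let 0 < α < 1 and δ > 0. For ε > 0 define ψ^{ε,δ}: ℝ³ → ℝ by ψ^{ε,δ}(x) = |x|^{-α} for |x| ≤ 1, ψ^{ε,δ}(x) = |x|^{-1}(1 − ε^δ(|x|²−1)^δ) for 1 ≤ |x|² ≤ 1 + 1/ε, and ψ^{ε,δ}(x) = 0 for |x|² ≥ 1 + 1/ε. Let H[f] := (2π²)^{-1} ∫_{ℝ³} ∫_{ℝ³} |v(x) − v(y)|² / |x−y|⁴ · |x|^{-1}|y|^{-1} dx dy where v(x) := |x| f(x) (the ground-state representation of the Hardy-subtracted quadratic form for d = 3, s = 1/2). Then lim_{ε→0} H[ψ^{ε,δ}] = 4 ( ψ(3/2 − α/2) + ψ(1+δ) − 2 ψ(1) ), where ψ = Γ'/Γ is the digamma function. -/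

import Mathlib

/-!
For `v = |x| f` radial, integrating out the angle turns `H[f]` into `2 E(w)`, where `w` is the
profile of `v` in the variable `|x|²` and `E(w) = ∫∫ (w p - w q)² / (p - q)² dp dq` over `(0, ∞)²`.
With `τ_p t = (min 1 t) ^ p` and `β = (1 - α) / 2`, the profile of the trial function is `τ_β` minus
the function `τ_δ (ε (t - 1))` on `(1, ∞)`. The energy `E` is invariant under affine changes of
variable, and as `ε → 0` the two parts live on separated scales: `τ_β` is constant where the second
one varies, and the remaining coupling tends to that of `τ_β` alone by dominated convergence. Hence
the energy tends to `E(τ_β) + E(τ_δ)`.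

Finally `E(τ_p) = 2 (ψ(1 + p) - ψ(1))`: on the unit square homogeneity reduces the double integral
to `∫₀¹ ((1 - u ^ p) / (1 - u))² du`, an integration by parts against `u / (1 - u)` combines it with
the contribution of `(0, 1) × (1, ∞)` into `2 ∫₀¹ (1 - u ^ p) / (1 - u) du`, and Gauss's integral
evaluates the latter.
-/

open MeasureTheory Real Set

noncomputable section

/-- The digamma function `ψ = Γ'/Γ`. -/
def digamma (x : ℝ) : ℝ := deriv Real.Gamma x / Real.Gamma x

/-- The ground-state representation of the Hardy-subtracted quadratic form for
`d = 3`, `s = 1/2`: `H[f] = (2π²)^{-1} ∫∫ |v(x)−v(y)|²/|x−y|⁴ · |x|^{-1}|y|^{-1} dx dy`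
with `v(x) = |x| f(x)`. -/
def Hform (f : EuclideanSpace ℝ (Fin 3) → ℝ) : ℝ :=
  (2 * Real.pi ^ 2)⁻¹ * ∫ x : EuclideanSpace ℝ (Fin 3), ∫ y : EuclideanSpace ℝ (Fin 3),
    (‖x‖ * f x - ‖y‖ * f y) ^ 2 / ‖x - y‖ ^ 4 * ‖x‖⁻¹ * ‖y‖⁻¹

/-- The trial function `ψ^{ε,δ}`. -/
def psiTrial (α δ ε : ℝ) (x : EuclideanSpace ℝ (Fin 3)) : ℝ :=
  if ‖x‖ ≤ 1 then ‖x‖ ^ (-α)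
  else if ‖x‖ ^ 2 ≤ 1 + 1 / ε then ‖x‖⁻¹ * (1 - ε ^ δ * (‖x‖ ^ 2 - 1) ^ δ)
  else 0

open Filter Topology
open scoped ENNReal

/-! ### Gauss's integral for the digamma function -/

theorem tendsto_add_natCast_sub_natCast_of_monotoneOn {f : ℝ → ℝ} (hf : MonotoneOn f (Ici 0))
    (hlim : Tendsto (fun x => f (x + 1) - f x) atTop (𝓝 0)) {x : ℝ} (hx : 0 ≤ x) :
    Tendsto (fun n : ℕ => f (x + n) - f n) atTop (𝓝 0) := by
  have hnat (N : ℕ) : Tendsto (fun n : ℕ => f (N + n) - f n) atTop (𝓝 0) := by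
    induction N with
    | zero => simp
    | succ N ih =>
      have h := hlim.comp (tendsto_atTop_add_const_left _ (N : ℝ) tendsto_natCast_atTop_atTop)
      simpa [Function.comp_def, add_right_comm] using h.add ih
  obtain ⟨N, hN⟩ := exists_nat_ge x
  have mem (n : ℕ) {y : ℝ} (hy : 0 ≤ y) : y + n ∈ Ici (0 : ℝ) := add_nonneg hy n.cast_nonneg
  refine squeeze_zero (fun n => sub_nonneg.2 ?_) (fun n => sub_le_sub_right ?_ _) (hnat N)
  · exact hf (mem_Ici.2 n.cast_nonneg) (mem n hx) (le_add_of_nonneg_left hx)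
  · exact hf (mem n hx) (mem n N.cast_nonneg) (by gcongr)

-- As for `log ∘ Gamma` in the Bohr–Mollerup theorem: the `1`-periodic function `f - g` is constant
-- because monotonicity interpolates the vanishing of the increments between consecutive integers.
theorem sub_eq_sub_of_monotoneOn_of_add_one {f g : ℝ → ℝ} (hf : MonotoneOn f (Ici 0))
    (hg : MonotoneOn g (Ici 0)) (hfg : ∀ x, 0 ≤ x → f (x + 1) - f x = g (x + 1) - g x)
    (hlim : Tendsto (fun x => f (x + 1) - f x) atTop (𝓝 0)) {x : ℝ} (hx : 0 ≤ x) :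
    f x - f 0 = g x - g 0 := by
  have periodic {y : ℝ} (hy : 0 ≤ y) (n : ℕ) : f (y + n) - g (y + n) = f y - g y := by
    induction n with
    | zero => simp
    | succ n ih =>
      have := hfg (y + n) (by positivity)
      push_cast
      rw [← add_assoc]
      linarith
  have hlim_g : Tendsto (fun x => g (x + 1) - g x) atTop (𝓝 0) :=
    hlim.congr' ((eventually_ge_atTop 0).mono hfg)
  have hdiff := (tendsto_add_natCast_sub_natCast_of_monotoneOn hf hlim hx).sub
    (tendsto_add_natCast_sub_natCast_of_monotoneOn hg hlim_g hx)
  have hconst (n : ℕ) : f (x + n) - f n - (g (x + n) - g n) = f x - f 0 - (g x - g 0) := by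
    have h0 := periodic le_rfl n
    rw [zero_add] at h0
    linarith [periodic hx n]
  simp_rw [hconst, sub_zero] at hdiff
  exact sub_eq_zero.1 (tendsto_nhds_unique tendsto_const_nhds hdiff)

theorem hasDerivAt_Gamma_of_pos {x : ℝ} (hx : 0 < x) :
    HasDerivAt Real.Gamma (deriv Real.Gamma x) x :=
  (differentiableOn_Gamma_Ioi.differentiableAt (Ioi_mem_nhds hx)).hasDerivAt

theorem digamma_add_one {x : ℝ} (hx : 0 < x) : digamma (x + 1) = digamma x + 1 / x := by
  have hΓ := (Real.Gamma_pos_of_pos hx).ne'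
  have hshift : HasDerivAt (fun y => Real.Gamma (y + 1)) (deriv Real.Gamma (x + 1)) x :=
    (hasDerivAt_Gamma_of_pos (by linarith)).comp_add_const x 1
  have hmul : HasDerivAt (fun y => y * Real.Gamma y)
      (1 * Real.Gamma x + x * deriv Real.Gamma x) x :=
    (hasDerivAt_id x).mul (hasDerivAt_Gamma_of_pos hx)
  have hrec : (fun y => Real.Gamma (y + 1)) =ᶠ[𝓝 x] fun y => y * Real.Gamma y := by
    filter_upwards [lt_mem_nhds hx] with y hy using Real.Gamma_add_one hy.ne'
  have hderiv := (hmul.congr_of_eventuallyEq hrec).unique hshift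
  rw [digamma, digamma, ← hderiv, Real.Gamma_add_one hx.ne']
  field_simp
  ring

theorem monotoneOn_digamma : MonotoneOn digamma (Ioi 0) := by
  have hlog (x : ℝ) (hx : x ∈ Ioi 0) : HasDerivAt (Real.log ∘ Real.Gamma) (digamma x) x :=
    (hasDerivAt_Gamma_of_pos hx).log (Real.Gamma_pos_of_pos hx).ne'
  exact (Real.convexOn_log_Gamma.monotoneOn_deriv
    fun x hx => (hlog x hx).differentiableAt).congr fun x hx => (hlog x hx).deriv

theorem one_sub_rpow_le {p u : ℝ} (hp : 0 ≤ p) (hu : u ∈ Icc (0 : ℝ) 1) :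
    1 - u ^ p ≤ (1 + p) * (1 - u) := by
  rcases le_total p 1 with h | h
  · have := Real.rpow_le_rpow_of_exponent_ge' hu.1 hu.2 hp h
    rw [Real.rpow_one] at this
    nlinarith [hu.2]
  · have := one_add_mul_self_le_rpow_one_add (s := u - 1) (by linarith [hu.1]) h
    rw [add_sub_cancel] at this
    nlinarith [hu.2]

theorem one_sub_rpow_div_one_sub_mem_Icc {p u : ℝ} (hp : 0 ≤ p) (hu : u ∈ Icc (0 : ℝ) 1) :
    (1 - u ^ p) / (1 - u) ∈ Icc 0 (1 + p) :=
  ⟨div_nonneg (sub_nonneg.2 (Real.rpow_le_one hu.1 hu.2 hp)) (sub_nonneg.2 hu.2),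
    div_le_of_le_mul₀ (sub_nonneg.2 hu.2) (by positivity) (one_sub_rpow_le hp hu)⟩

theorem intervalIntegrable_of_norm_le {f : ℝ → ℝ} {a b C : ℝ} (hab : a ≤ b) (hf : Measurable f)
    (hC : ∀ x ∈ Ioc a b, ‖f x‖ ≤ C) : IntervalIntegrable f volume a b := by
  rw [intervalIntegrable_iff_integrableOn_Ioc_of_le hab]
  exact Measure.integrableOn_of_bounded (by simp) hf.aestronglyMeasurable
    ((ae_restrict_mem measurableSet_Ioc).mono hC)

theorem intervalIntegrable_one_sub_rpow_div_one_sub {p : ℝ} (hp : 0 ≤ p) :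
    IntervalIntegrable (fun u : ℝ => (1 - u ^ p) / (1 - u)) volume 0 1 := by
  refine intervalIntegrable_of_norm_le (C := 1 + p) zero_le_one (by fun_prop) fun u hu => ?_
  have h := one_sub_rpow_div_one_sub_mem_Icc hp (Ioc_subset_Icc_self hu)
  exact (Real.norm_of_nonneg h.1).trans_le h.2

theorem integral_one_sub_rpow_add_one_sub {p : ℝ} (hp : 0 ≤ p) :
    (∫ u in (0 : ℝ)..1, (1 - u ^ (p + 1)) / (1 - u)) - ∫ u in (0 : ℝ)..1, (1 - u ^ p) / (1 - u) =
      1 / (p + 1) := by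
  rw [← intervalIntegral.integral_sub
    (intervalIntegrable_one_sub_rpow_div_one_sub (by positivity))
    (intervalIntegrable_one_sub_rpow_div_one_sub hp)]
  have hpow : ∫ u in (0 : ℝ)..1, u ^ p = 1 / (p + 1) := by
    rw [integral_rpow (Or.inl (by linarith)), Real.one_rpow, Real.zero_rpow (by linarith), sub_zero]
  rw [← hpow]
  refine intervalIntegral.integral_congr_Ioo_of_le zero_le_one fun u hu => ?_
  have : 1 - u ≠ 0 := (sub_pos.2 hu.2).ne'
  simp only [Real.rpow_add_one hu.1.ne']
  field_simp
  ring

theorem integral_one_sub_rpow_div_one_sub {p : ℝ} (hp : 0 ≤ p) :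
    ∫ u in (0 : ℝ)..1, (1 - u ^ p) / (1 - u) = digamma (1 + p) - digamma 1 := by
  have hmono : MonotoneOn (fun p : ℝ => ∫ u in (0 : ℝ)..1, (1 - u ^ p) / (1 - u)) (Ici 0) := by
    intro p hp q hq hpq
    refine intervalIntegral.integral_mono_on_of_le_Ioo zero_le_one
      (intervalIntegrable_one_sub_rpow_div_one_sub hp)
      (intervalIntegrable_one_sub_rpow_div_one_sub hq) fun u hu => ?_
    have := sub_nonneg.2 hu.2.le
    have := Real.rpow_le_rpow_of_exponent_ge hu.1 hu.2.le hpq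
    gcongr
  have hmono' : MonotoneOn (fun p => digamma (1 + p)) (Ici 0) := fun p hp q hq hpq =>
    monotoneOn_digamma (mem_Ioi.2 (add_pos_of_pos_of_nonneg one_pos hp))
      (mem_Ioi.2 (add_pos_of_pos_of_nonneg one_pos hq)) (by gcongr)
  have hincr (p : ℝ) (hp : 0 ≤ p) : digamma (1 + (p + 1)) - digamma (1 + p) = 1 / (p + 1) := by
    rw [← add_assoc, digamma_add_one (by linarith), add_sub_cancel_left, add_comm]
  have hlim : Tendsto (fun p : ℝ => 1 / (p + 1)) atTop (𝓝 0) := by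
    simpa [Function.comp_def] using
      tendsto_inv_atTop_zero.comp (tendsto_atTop_add_const_right atTop (1 : ℝ) tendsto_id)
  have h := sub_eq_sub_of_monotoneOn_of_add_one hmono hmono'
    (fun p hp => (integral_one_sub_rpow_add_one_sub hp).trans (hincr p hp).symm)
    (hlim.congr' <| (eventually_ge_atTop 0).mono fun p hp =>
      (integral_one_sub_rpow_add_one_sub hp).symm) hp
  simpa using h

/-! ### Integration by parts against `u / (1 - u)` -/

theorem intervalIntegrable_one_sub_rpow_div_one_sub_sq {p : ℝ} (hp : 0 ≤ p) :
    IntervalIntegrable (fun u : ℝ => ((1 - u ^ p) / (1 - u)) ^ 2) volume 0 1 := by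
  refine intervalIntegrable_of_norm_le (C := (1 + p) ^ 2) zero_le_one (by fun_prop) fun u hu => ?_
  have h := one_sub_rpow_div_one_sub_mem_Icc hp (Ioc_subset_Icc_self hu)
  exact (Real.norm_of_nonneg (sq_nonneg _)).trans_le (pow_le_pow_left₀ h.1 h.2 2)

theorem intervalIntegrable_rpow_mul_one_sub_rpow_div_one_sub {p : ℝ} (hp : 0 ≤ p) :
    IntervalIntegrable (fun u : ℝ => u ^ p * ((1 - u ^ p) / (1 - u))) volume 0 1 :=
  (intervalIntegrable_one_sub_rpow_div_one_sub hp).continuousOn_mul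
    (Real.continuous_rpow_const hp).continuousOn

theorem intervalIntegrable_one_sub_rpow_mul_one_sub_rpow_div_one_sub {p : ℝ} (hp : 0 ≤ p) :
    IntervalIntegrable (fun u : ℝ => (1 - u ^ p) * ((1 - u ^ p) / (1 - u))) volume 0 1 :=
  (intervalIntegrable_one_sub_rpow_div_one_sub hp).continuousOn_mul
    (continuousOn_const.sub (Real.continuous_rpow_const hp).continuousOn)

theorem hasDerivAt_mul_one_sub_mul_one_sub_rpow_div_one_sub_sq (p : ℝ) {u : ℝ}
    (hu : u ∈ Ioo (0 : ℝ) 1) :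
    HasDerivAt (fun u : ℝ => u * (1 - u) * ((1 - u ^ p) / (1 - u)) ^ 2)
      (((1 - u ^ p) / (1 - u)) ^ 2 - 2 * p * (u ^ p * ((1 - u ^ p) / (1 - u)))) u := by
  have hu1 : 1 - u ≠ 0 := (sub_pos.2 hu.2).ne'
  have hpow : HasDerivAt (fun u : ℝ => 1 - u ^ p) (-(p * u ^ (p - 1))) u :=
    (Real.hasDerivAt_rpow_const (Or.inl hu.1.ne')).const_sub 1
  have hsub : HasDerivAt (fun u : ℝ => 1 - u) (-1) u := (hasDerivAt_id u).const_sub 1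
  refine (((hasDerivAt_id u).mul hsub).mul ((hpow.div hsub hu1).pow 2)).congr_deriv ?_
  have : u ^ p = u ^ (p - 1) * u := by rw [← Real.rpow_add_one hu.1.ne', sub_add_cancel]
  simp only [id, Pi.pow_apply, Pi.mul_apply, Pi.div_apply, this, Nat.cast_ofNat,
    Nat.add_one_sub_one, pow_one]
  field_simp
  ring

theorem integral_one_sub_rpow_div_one_sub_sq {p : ℝ} (hp : 0 ≤ p) :
    ∫ u in (0 : ℝ)..1, ((1 - u ^ p) / (1 - u)) ^ 2 =
      2 * p * ∫ u in (0 : ℝ)..1, u ^ p * ((1 - u ^ p) / (1 - u)) := by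
  have hsq := intervalIntegrable_one_sub_rpow_div_one_sub_sq hp
  have hmul := (intervalIntegrable_rpow_mul_one_sub_rpow_div_one_sub hp).const_mul (2 * p)
  have hbound : ∀ u ∈ Ioo (0 : ℝ) 1, u * (1 - u) * ((1 - u ^ p) / (1 - u)) ^ 2 ∈
      Icc 0 (u * (1 - u) * (1 + p) ^ 2) := fun u hu => by
    have h := one_sub_rpow_div_one_sub_mem_Icc hp (Ioo_subset_Icc_self hu)
    have hu' : 0 ≤ u * (1 - u) := mul_nonneg hu.1.le (sub_nonneg.2 hu.2.le)
    exact ⟨mul_nonneg hu' (sq_nonneg _),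
      mul_le_mul_of_nonneg_left (pow_le_pow_left₀ h.1 h.2 2) hu'⟩
  have hlim {l : Filter ℝ} {c : ℝ} (hl : Ioo (0 : ℝ) 1 ∈ l) (hlc : l ≤ 𝓝 c)
      (hc : c * (1 - c) = 0) :
      Tendsto (fun u : ℝ => u * (1 - u) * ((1 - u ^ p) / (1 - u)) ^ 2) l (𝓝 0) :=
    squeeze_zero' (mem_of_superset hl fun u hu => (hbound u hu).1)
      (mem_of_superset hl fun u hu => (hbound u hu).2)
      ((Continuous.tendsto' (by fun_prop) c 0 (by rw [hc, zero_mul])).mono_left hlc)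
  have h := intervalIntegral.integral_eq_sub_of_hasDerivAt_of_tendsto zero_lt_one
    (fun u hu => hasDerivAt_mul_one_sub_mul_one_sub_rpow_div_one_sub_sq p hu) (hsq.sub hmul)
    (hlim (c := 0) (Ioo_mem_nhdsGT one_pos) nhdsWithin_le_nhds (by norm_num))
    (hlim (c := 1) (Ioo_mem_nhdsLT one_pos) nhdsWithin_le_nhds (by norm_num))
  rw [intervalIntegral.integral_sub hsq hmul, intervalIntegral.integral_const_mul, sub_self] at h
  exact sub_eq_zero.1 h

/-! ### Lower Lebesgue integrals -/

theorem setLIntegral_Ioc_ofReal {f : ℝ → ℝ} {a b : ℝ} (hab : a ≤ b)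
    (hf : IntervalIntegrable f volume a b) (hf0 : ∀ x ∈ Ioc a b, 0 ≤ f x) :
    ∫⁻ x in Ioc a b, ENNReal.ofReal (f x) = ENNReal.ofReal (∫ x in a..b, f x) := by
  rw [intervalIntegral.integral_of_le hab, ofReal_integral_eq_lintegral_ofReal
    ((intervalIntegrable_iff_integrableOn_Ioc_of_le hab).1 hf)
    ((ae_restrict_mem measurableSet_Ioc).mono hf0)]

theorem setLIntegral_eq_ofReal_mul_comp_affine {c : ℝ} (hc : 0 < c) (a : ℝ) {s : Set ℝ}
    (hs : MeasurableSet s) (f : ℝ → ℝ≥0∞) :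
    ∫⁻ x in s, f x = ENNReal.ofReal c * ∫⁻ t in {t | a + c * t ∈ s}, f (a + c * t) := by
  have hderiv (t : ℝ) : HasDerivAt (fun t => a + c * t) c t := by
    simpa using ((hasDerivAt_id t).const_mul c).const_add a
  have hsurj : Function.Surjective fun t => a + c * t := fun x =>
    ⟨(x - a) / c, by simp only; field_simp; ring⟩
  have h := lintegral_image_eq_lintegral_abs_deriv_mul (f := fun t => a + c * t)
    (hs.preimage (by fun_prop : Measurable fun t => a + c * t))
    (fun t _ => (hderiv t).hasDerivWithinAt)
    (fun x _ y _ hxy => mul_left_cancel₀ hc.ne' (add_left_cancel hxy)) f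
  rwa [image_preimage_eq s hsurj, abs_of_pos hc,
    lintegral_const_mul' _ _ ENNReal.ofReal_ne_top] at h

theorem lintegral_prod_eq_two_mul_of_symm {α : Type*} [MeasurableSpace α] [LinearOrder α]
    [TopologicalSpace α] [OrderClosedTopology α] [SecondCountableTopology α]
    [OpensMeasurableSpace α] {μ : Measure α} [SFinite μ] {k : α × α → ℝ≥0∞}
    (hk : Measurable k) (hsymm : ∀ z, k z.swap = k z) (hdiag : ∀ a, k (a, a) = 0) :
    ∫⁻ z, k z ∂μ.prod μ = 2 * ∫⁻ t, ∫⁻ s in Iio t, k (t, s) ∂μ ∂μ := by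
  set L : Set (α × α) := {z | z.2 < z.1}
  have hL : MeasurableSet L := measurableSet_lt measurable_snd measurable_fst
  have hkL : Measurable (L.indicator k) := hk.indicator hL
  have hsplit : ∀ z, k z = L.indicator k z + L.indicator k z.swap := fun ⟨a, b⟩ => by
    rcases lt_trichotomy b a with h | rfl | h
    · simp [L, indicator, h, h.not_gt]
    · simp [L, hdiag]
    · simp [L, indicator, h, h.not_gt, ← hsymm (a, b)]
  calc ∫⁻ z, k z ∂μ.prod μ
      = ∫⁻ z, L.indicator k z ∂μ.prod μ + ∫⁻ z, L.indicator k z.swap ∂μ.prod μ := by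
        rw [← lintegral_add_left hkL, lintegral_congr hsplit]
    _ = 2 * ∫⁻ z, L.indicator k z ∂μ.prod μ := by rw [lintegral_prod_swap, two_mul]
    _ = 2 * ∫⁻ t, ∫⁻ s in Iio t, k (t, s) ∂μ ∂μ := by
        rw [lintegral_prod _ hkL.aemeasurable]
        congr! 3 with t
        exact lintegral_indicator measurableSet_Iio _

theorem lintegral_Ioi_inv_sub_sq {a c : ℝ} (h : a < c) :
    ∫⁻ b in Ioi c, ENNReal.ofReal ((a - b) ^ 2)⁻¹ = ENNReal.ofReal (c - a)⁻¹ := by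
  have hderiv (b : ℝ) (hb : b ∈ Ici c) :
      HasDerivAt (fun b => (a - b)⁻¹) ((a - b) ^ 2)⁻¹ b :=
    (((hasDerivAt_id b).const_sub a).inv (sub_neg.2 (h.trans_le hb)).ne).congr_deriv (by simp)
  have hlim : Tendsto (fun b => (a - b)⁻¹) atTop (𝓝 0) :=
    tendsto_inv_atBot_zero.comp (tendsto_atBot_add_const_left _ a tendsto_neg_atTop_atBot)
  have hpos : ∀ b ∈ Ioi c, 0 ≤ ((a - b) ^ 2)⁻¹ := fun b _ => by positivity
  have hint := integrableOn_Ioi_deriv_of_nonneg' hderiv hpos hlim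
  rw [← ofReal_integral_eq_lintegral_ofReal hint (ae_restrict_of_forall_mem measurableSet_Ioi hpos),
    integral_Ioi_of_hasDerivAt_of_tendsto' hderiv hint hlim, zero_sub, ← inv_neg, neg_sub]

theorem lintegral_Ioc_inv_sub_mul_sq {a b c m : ℝ} (hab : a ≤ b)
    (hne : ∀ z ∈ Icc a b, c - m * z ≠ 0) :
    ∫⁻ z in Ioc a b, ENNReal.ofReal ((c - m * z) ^ 2)⁻¹ =
      ENNReal.ofReal ((b - a) / ((c - m * a) * (c - m * b))) := by
  have ha := hne a (left_mem_Icc.2 hab)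
  rw [← uIcc_of_le hab] at hne
  have hderiv (z : ℝ) (hz : z ∈ uIcc a b) :
      HasDerivAt (fun z => (z - a) / ((c - m * a) * (c - m * z))) ((c - m * z) ^ 2)⁻¹ z := by
    have hz' := hne z hz
    have hden : HasDerivAt (fun z => c - m * z) (-m) z := by
      simpa using ((hasDerivAt_id z).const_mul m).const_sub c
    refine (((hasDerivAt_id z).sub_const a).div (hden.const_mul (c - m * a))
      (mul_ne_zero ha hz')).congr_deriv ?_
    simp only [id]
    field_simp
    ring
  have hint : IntervalIntegrable (fun z => ((c - m * z) ^ 2)⁻¹) volume a b :=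
    ContinuousOn.intervalIntegrable
      (ContinuousOn.inv₀ (by fun_prop) fun z hz => pow_ne_zero 2 (hne z hz))
  rw [setLIntegral_Ioc_ofReal hab hint fun z _ => by positivity,
    intervalIntegral.integral_eq_sub_of_hasDerivAt hderiv hint, sub_self, zero_div, sub_zero]

theorem lintegral_Ioc_prod_of_symm_of_homogeneous {k : ℝ × ℝ → ℝ≥0∞} {r : ℝ} (hr : 0 < r)
    (hk : Measurable k) (hsymm : ∀ z, k z.swap = k z) (hdiag : ∀ a, k (a, a) = 0)
    (hhom : ∀ t ∈ Ioc (0 : ℝ) 1, ∀ u ∈ Ioo (0 : ℝ) 1,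
      k (t, t * u) = ENNReal.ofReal (t ^ (r - 2)) * k (1, u)) :
    ∫⁻ z in Ioc (0 : ℝ) 1 ×ˢ Ioc (0 : ℝ) 1, k z =
      ENNReal.ofReal (2 / r) * ∫⁻ u in Ioc (0 : ℝ) 1, k (1, u) := by
  have hinner : ∀ t ∈ Ioc (0 : ℝ) 1, ∫⁻ s in Iio t, k (t, s) ∂volume.restrict (Ioc (0 : ℝ) 1) =
      ENNReal.ofReal (t ^ (r - 1)) * ∫⁻ u in Ioc (0 : ℝ) 1, k (1, u) := fun t ht => by
    have hdom : Iio t ∩ Ioc 0 1 = Ioo 0 t := by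
      ext s
      simp only [mem_inter_iff, mem_Iio, mem_Ioc, mem_Ioo]
      exact ⟨fun h => ⟨h.2.1, h.1⟩, fun h => ⟨h.2, h.1, h.2.le.trans ht.2⟩⟩
    have hpre : {u : ℝ | 0 + t * u ∈ Ioo 0 t} = Ioo 0 1 := by
      ext u
      simp [ht.1, mul_lt_iff_lt_one_right]
    rw [Measure.restrict_restrict measurableSet_Iio, hdom,
      setLIntegral_eq_ofReal_mul_comp_affine ht.1 0 measurableSet_Ioo, hpre]
    simp only [zero_add]
    rw [setLIntegral_congr_fun measurableSet_Ioo (hhom t ht),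
      lintegral_const_mul' _ _ ENNReal.ofReal_ne_top, ← mul_assoc, ← ENNReal.ofReal_mul ht.1.le,
      restrict_Ioo_eq_restrict_Ioc, mul_comm t, ← Real.rpow_add_one ht.1.ne']
    congr 3
    ring
  have hpow : ∫⁻ t in Ioc (0 : ℝ) 1, ENNReal.ofReal (t ^ (r - 1)) = ENNReal.ofReal r⁻¹ := by
    rw [setLIntegral_Ioc_ofReal zero_le_one
      (intervalIntegral.intervalIntegrable_rpow' (by linarith))
      fun t ht => Real.rpow_nonneg ht.1.le _, integral_rpow (Or.inl (by linarith))]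
    simp [Real.zero_rpow hr.ne']
  rw [Measure.volume_eq_prod, ← Measure.prod_restrict,
    lintegral_prod_eq_two_mul_of_symm hk hsymm hdiag,
    setLIntegral_congr_fun measurableSet_Ioc hinner, lintegral_mul_const _ (by fun_prop), hpow,
    ← mul_assoc, div_eq_mul_inv, ENNReal.ofReal_mul zero_le_two, ENNReal.ofReal_ofNat]

/-! ### The energy of a profile on the half-line -/

/-- The squared difference quotient of `w` at a pair of points, which is the energy density of
`interactionEnergy`; it vanishes on the diagonal because `x / 0 = 0`. -/
def diffQuotSq (w : ℝ → ℝ) (z : ℝ × ℝ) : ℝ≥0∞ :=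
  ENNReal.ofReal ((w z.1 - w z.2) ^ 2 / (z.1 - z.2) ^ 2)

/-- The part `∫_S ∫_T (w p - w q)² / (p - q)² dq dp` of the homogeneous `H^{1/2}` energy of `w` that
couples `S` with `T`; the energy of `w` on `S` is `interactionEnergy w S S`. -/
def interactionEnergy (w : ℝ → ℝ) (S T : Set ℝ) : ℝ≥0∞ :=
  ∫⁻ z in S ×ˢ T, diffQuotSq w z

theorem measurable_diffQuotSq {w : ℝ → ℝ} (hw : Measurable w) : Measurable (diffQuotSq w) := by
  unfold diffQuotSq
  fun_prop

theorem diffQuotSq_swap (w : ℝ → ℝ) (z : ℝ × ℝ) : diffQuotSq w z.swap = diffQuotSq w z := by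
  simp only [diffQuotSq, Prod.fst_swap, Prod.snd_swap, sub_sq_comm]

theorem diffQuotSq_eq_mul (w : ℝ → ℝ) (p q : ℝ) :
    diffQuotSq w (p, q) = ENNReal.ofReal ((w p - w q) ^ 2) * ENNReal.ofReal ((p - q) ^ 2)⁻¹ := by
  rw [diffQuotSq, div_eq_mul_inv, ENNReal.ofReal_mul (sq_nonneg _)]

theorem interactionEnergy_eq_lintegral_lintegral {w : ℝ → ℝ} (hw : Measurable w) (S T : Set ℝ) :
    interactionEnergy w S T = ∫⁻ p in S, ∫⁻ q in T, diffQuotSq w (p, q) :=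
  setLIntegral_prod _ (measurable_diffQuotSq hw).aemeasurable

theorem interactionEnergy_comm (w : ℝ → ℝ) (S T : Set ℝ) :
    interactionEnergy w S T = interactionEnergy w T S := by
  simp only [interactionEnergy, Measure.volume_eq_prod, ← Measure.prod_restrict]
  rw [← lintegral_prod_swap]
  simp only [diffQuotSq_swap]

theorem interactionEnergy_union_left (w : ℝ → ℝ) {S S' T : Set ℝ} (hS' : MeasurableSet S')
    (hT : MeasurableSet T) (hdisj : Disjoint S S') :
    interactionEnergy w (S ∪ S') T = interactionEnergy w S T + interactionEnergy w S' T := by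
  rw [interactionEnergy, union_prod, lintegral_union (hS'.prod hT) (hdisj.set_prod_left T T)]
  rfl

theorem interactionEnergy_Ioi (w : ℝ → ℝ) {a b : ℝ} (hab : a ≤ b) :
    interactionEnergy w (Ioi a) (Ioi a) = interactionEnergy w (Ioc a b) (Ioc a b) +
      interactionEnergy w (Ioi b) (Ioi b) + 2 * interactionEnergy w (Ioc a b) (Ioi b) := by
  have hsplit {T : Set ℝ} (hT : MeasurableSet T) : interactionEnergy w (Ioi a) T =
      interactionEnergy w (Ioc a b) T + interactionEnergy w (Ioi b) T := by
    rw [← Ioc_union_Ioi_eq_Ioi hab,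
      interactionEnergy_union_left w measurableSet_Ioi hT (Ioc_disjoint_Ioi le_rfl)]
  rw [hsplit measurableSet_Ioi, interactionEnergy_comm w (Ioc a b) (Ioi a),
    interactionEnergy_comm w (Ioi b) (Ioi a), hsplit measurableSet_Ioc, hsplit measurableSet_Ioi,
    interactionEnergy_comm w (Ioi b) (Ioc a b)]
  ring

theorem interactionEnergy_congr {v w : ℝ → ℝ} {S T : Set ℝ} (hS : MeasurableSet S)
    (hT : MeasurableSet T) (h : ∀ p ∈ S, ∀ q ∈ T, (v p - v q) ^ 2 = (w p - w q) ^ 2) :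
    interactionEnergy v S T = interactionEnergy w S T :=
  setLIntegral_congr_fun (hS.prod hT) fun z hz => by
    simp only [diffQuotSq, h z.1 hz.1 z.2 hz.2]

theorem interactionEnergy_eq_zero_of_eq_const {w : ℝ → ℝ} {S : Set ℝ} {c : ℝ}
    (hS : MeasurableSet S) (hw : ∀ p ∈ S, w p = c) : interactionEnergy w S S = 0 :=
  setLIntegral_eq_zero (hS.prod hS) fun z hz => by
    simp [diffQuotSq, hw z.1 hz.1, hw z.2 hz.2]

theorem interactionEnergy_comp_affine {v : ℝ → ℝ} (hv : Measurable v) {c : ℝ} (hc : 0 < c) (a : ℝ)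
    {S T : Set ℝ} (hS : MeasurableSet S) (hT : MeasurableSet T) :
    interactionEnergy (fun t => v (a + c * t)) {t | a + c * t ∈ S} {t | a + c * t ∈ T} =
      interactionEnergy v S T := by
  rw [interactionEnergy_eq_lintegral_lintegral (by fun_prop),
    interactionEnergy_eq_lintegral_lintegral hv, setLIntegral_eq_ofReal_mul_comp_affine hc a hS,
    ← lintegral_const_mul' _ _ ENNReal.ofReal_ne_top]
  congr with p
  rw [setLIntegral_eq_ofReal_mul_comp_affine hc a hT,
    ← lintegral_const_mul' _ _ ENNReal.ofReal_ne_top,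
    ← lintegral_const_mul' _ _ ENNReal.ofReal_ne_top]
  congr with q
  rw [diffQuotSq, diffQuotSq, ← ENNReal.ofReal_mul hc.le, ← ENNReal.ofReal_mul hc.le]
  simp only [add_sub_add_left_eq_sub, ← mul_sub]
  congr 1
  field_simp

theorem interactionEnergy_Ioi_of_eq_const {w : ℝ → ℝ} (hw : Measurable w) {S : Set ℝ} {b c : ℝ}
    (hS : MeasurableSet S) (hSb : S ⊆ Iic b) (hwc : ∀ q ∈ Ioi b, w q = c) :
    interactionEnergy w S (Ioi b) = ∫⁻ p in S, ENNReal.ofReal ((w p - c) ^ 2 / (b - p)) := by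
  rw [interactionEnergy_eq_lintegral_lintegral hw]
  refine lintegral_congr_ae ?_
  filter_upwards [ae_restrict_mem hS, ae_restrict_of_ae (Measure.ae_ne volume b)] with p hp hpb
  calc ∫⁻ q in Ioi b, diffQuotSq w (p, q)
      = ∫⁻ q in Ioi b, ENNReal.ofReal ((w p - c) ^ 2) * ENNReal.ofReal ((p - q) ^ 2)⁻¹ :=
        setLIntegral_congr_fun measurableSet_Ioi fun q hq => by
          simp only [diffQuotSq_eq_mul, hwc q hq]
    _ = ENNReal.ofReal ((w p - c) ^ 2 / (b - p)) := by
        rw [lintegral_const_mul' _ _ ENNReal.ofReal_ne_top,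
          lintegral_Ioi_inv_sub_sq (lt_of_le_of_ne (hSb hp) hpb),
          ← ENNReal.ofReal_mul (sq_nonneg _), div_eq_mul_inv]

/-! ### Truncated powers -/

/-- The truncated power `t ↦ t ^ p` on `[0, 1]`, continued by `1` on `[1, ∞)`: the building block of
the trial profile in the variable `t = |x|²`. -/
def truncPow (p t : ℝ) : ℝ := min 1 t ^ p

@[fun_prop]
theorem measurable_truncPow (p : ℝ) : Measurable (truncPow p) := by
  unfold truncPow
  fun_prop

theorem truncPow_of_le_one (p : ℝ) {t : ℝ} (ht : t ≤ 1) : truncPow p t = t ^ p := by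
  rw [truncPow, min_eq_right ht]

theorem truncPow_of_one_le (p : ℝ) {t : ℝ} (ht : 1 ≤ t) : truncPow p t = 1 := by
  rw [truncPow, min_eq_left ht, Real.one_rpow]

theorem interactionEnergy_truncPow_Ioc {p : ℝ} (hp : 0 ≤ p) :
    interactionEnergy (truncPow p) (Ioc 0 1) (Ioc 0 1) =
      ENNReal.ofReal (2 * ∫ u in (0 : ℝ)..1, u ^ p * ((1 - u ^ p) / (1 - u))) := by
  rcases hp.eq_or_lt with rfl | hp'
  · simp [interactionEnergy, diffQuotSq, truncPow]
  have hhom : ∀ t ∈ Ioc (0 : ℝ) 1, ∀ u ∈ Ioo (0 : ℝ) 1, diffQuotSq (truncPow p) (t, t * u) =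
      ENNReal.ofReal (t ^ (2 * p - 2)) * diffQuotSq (truncPow p) (1, u) := fun t ht u hu => by
    have ht0 := ht.1.ne'
    have hu1 : 1 - u ≠ 0 := (sub_pos.2 hu.2).ne'
    rw [diffQuotSq, diffQuotSq, ← ENNReal.ofReal_mul (Real.rpow_nonneg ht.1.le _)]
    simp only
    rw [truncPow_of_le_one p ht.2, truncPow_of_one_le p le_rfl, truncPow_of_le_one p hu.2.le,
      truncPow_of_le_one p (mul_le_one₀ ht.2 hu.1.le hu.2.le), Real.mul_rpow ht.1.le hu.1.le,
      Real.rpow_sub ht.1, mul_comm 2 p, Real.rpow_mul ht.1.le, Real.rpow_two, Real.rpow_two,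
      ← mul_one_sub, ← mul_one_sub]
    congr 1
    field_simp
  have hone : ∀ u ∈ Ioc (0 : ℝ) 1, diffQuotSq (truncPow p) (1, u) =
      ENNReal.ofReal (((1 - u ^ p) / (1 - u)) ^ 2) := fun u hu => by
    simp only [diffQuotSq, truncPow_of_one_le p le_rfl, truncPow_of_le_one p hu.2, div_pow]
  rw [interactionEnergy, lintegral_Ioc_prod_of_symm_of_homogeneous (mul_pos two_pos hp')
    (measurable_diffQuotSq (measurable_truncPow p)) (diffQuotSq_swap _)
    (fun a => by simp [diffQuotSq]) hhom, setLIntegral_congr_fun measurableSet_Ioc hone,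
    setLIntegral_Ioc_ofReal zero_le_one (intervalIntegrable_one_sub_rpow_div_one_sub_sq hp)
      fun u _ => sq_nonneg _, ← ENNReal.ofReal_mul (by positivity),
    integral_one_sub_rpow_div_one_sub_sq hp]
  congr 1
  field_simp

theorem interactionEnergy_truncPow_Ioc_Ioi {p : ℝ} (hp : 0 ≤ p) :
    interactionEnergy (truncPow p) (Ioc 0 1) (Ioi 1) =
      ENNReal.ofReal (∫ u in (0 : ℝ)..1, (1 - u ^ p) * ((1 - u ^ p) / (1 - u))) := by
  rw [interactionEnergy_Ioi_of_eq_const (measurable_truncPow p) measurableSet_Ioc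
    (fun t ht => ht.2) fun t ht => truncPow_of_one_le p (le_of_lt ht),
    ← setLIntegral_Ioc_ofReal zero_le_one
      (intervalIntegrable_one_sub_rpow_mul_one_sub_rpow_div_one_sub hp) fun u hu => mul_nonneg
      (sub_nonneg.2 (Real.rpow_le_one hu.1.le hu.2 hp))
      (one_sub_rpow_div_one_sub_mem_Icc hp (Ioc_subset_Icc_self hu)).1]
  refine setLIntegral_congr_fun measurableSet_Ioc fun u hu => ?_
  simp only [truncPow_of_le_one p hu.2]
  congr 1
  ring

theorem interactionEnergy_truncPow {p : ℝ} (hp : 0 ≤ p) :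
    interactionEnergy (truncPow p) (Ioi 0) (Ioi 0) =
      ENNReal.ofReal (2 * (digamma (1 + p) - digamma 1)) := by
  have hflat : interactionEnergy (truncPow p) (Ioi 1) (Ioi 1) = 0 :=
    interactionEnergy_eq_zero_of_eq_const measurableSet_Ioi fun t ht =>
      truncPow_of_one_le p (le_of_lt ht)
  have hmul := intervalIntegrable_rpow_mul_one_sub_rpow_div_one_sub hp
  have hmul' := intervalIntegrable_one_sub_rpow_mul_one_sub_rpow_div_one_sub hp
  have hD {u : ℝ} (hu : u ∈ Icc (0 : ℝ) 1) := (one_sub_rpow_div_one_sub_mem_Icc hp hu).1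
  rw [interactionEnergy_Ioi _ zero_le_one, hflat, add_zero, interactionEnergy_truncPow_Ioc hp,
    interactionEnergy_truncPow_Ioc_Ioi hp, ← ENNReal.ofReal_ofNat 2,
    ← ENNReal.ofReal_mul zero_le_two, ← ENNReal.ofReal_add, ← mul_add,
    ← intervalIntegral.integral_add hmul hmul', ← integral_one_sub_rpow_div_one_sub hp]
  · simp only [← add_mul, add_sub_cancel, one_mul]
  · exact mul_nonneg zero_le_two <| intervalIntegral.integral_nonneg zero_le_one fun u hu =>
      mul_nonneg (Real.rpow_nonneg hu.1 p) (hD hu)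
  · exact mul_nonneg zero_le_two <| intervalIntegral.integral_nonneg zero_le_one fun u hu =>
      mul_nonneg (sub_nonneg.2 (Real.rpow_le_one hu.1 hu.2 hp)) (hD hu)

theorem toReal_interactionEnergy_truncPow {p : ℝ} (hp : 0 ≤ p) :
    (interactionEnergy (truncPow p) (Ioi 0) (Ioi 0)).toReal =
      2 * (digamma (1 + p) - digamma 1) := by
  have hdigamma : digamma 1 ≤ digamma (1 + p) :=
    monotoneOn_digamma (mem_Ioi.2 one_pos) (mem_Ioi.2 (by linarith)) (le_add_of_nonneg_right hp)
  rw [interactionEnergy_truncPow hp, ENNReal.toReal_ofReal (by linarith)]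

theorem interactionEnergy_truncPow_ne_top {p : ℝ} (hp : 0 ≤ p) :
    interactionEnergy (truncPow p) (Ioi 0) (Ioi 0) ≠ ⊤ :=
  interactionEnergy_truncPow hp ▸ ENNReal.ofReal_ne_top

/-! ### Decoupling of separated scales -/

/-- The dilation `t ↦ v (ε (t - 1))` of a profile on the half-line, placed on `(1, ∞)` and continued
by `0`: as `ε → 0` it moves to infinity. -/
def outerDilation (v : ℝ → ℝ) (ε : ℝ) : ℝ → ℝ :=
  (Ioi 1).indicator fun t => v (ε * (t - 1))

theorem measurable_outerDilation {v : ℝ → ℝ} (hv : Measurable v) (ε : ℝ) :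
    Measurable (outerDilation v ε) :=
  Measurable.indicator (by fun_prop) measurableSet_Ioi

theorem outerDilation_of_le_one (v : ℝ → ℝ) (ε : ℝ) {t : ℝ} (ht : t ≤ 1) :
    outerDilation v ε t = 0 :=
  indicator_of_notMem (notMem_Ioi.2 ht) _

theorem outerDilation_of_one_lt (v : ℝ → ℝ) (ε : ℝ) {t : ℝ} (ht : 1 < t) :
    outerDilation v ε t = v (ε * (t - 1)) :=
  indicator_of_mem (mem_Ioi.2 ht) _

theorem tendsto_outerDilation {v : ℝ → ℝ} (hv : Tendsto v (𝓝[>] 0) (𝓝 0)) (t : ℝ) :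
    Tendsto (fun ε => outerDilation v ε t) (𝓝[>] 0) (𝓝 0) := by
  rcases le_or_gt t 1 with ht | ht
  · simp [outerDilation_of_le_one v _ ht]
  · simp only [outerDilation_of_one_lt v _ ht]
    refine hv.comp (tendsto_nhdsWithin_iff.2 ⟨?_, ?_⟩)
    · exact ((continuous_mul_const (t - 1)).tendsto' 0 0 (zero_mul _)).mono_left
        nhdsWithin_le_nhds
    · exact eventually_mem_nhdsWithin.mono fun ε hε => mul_pos hε (sub_pos.2 ht)

theorem abs_outerDilation_le {v : ℝ → ℝ} (hv : MonotoneOn (fun t => |v t|) (Ioi 0)) {ε : ℝ}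
    (hε : ε ∈ Ioc (0 : ℝ) 1) (t : ℝ) : |outerDilation v ε t| ≤ |outerDilation v 1 t| := by
  rcases le_or_gt t 1 with ht | ht
  · simp [outerDilation_of_le_one v _ ht]
  · have ht' := sub_pos.2 ht
    rw [outerDilation_of_one_lt v _ ht, outerDilation_of_one_lt v _ ht, one_mul]
    exact hv (mul_pos hε.1 ht') ht' (mul_le_of_le_one_left ht'.le hε.2)

theorem interactionEnergy_outerDilation_Ioi {v : ℝ → ℝ} (hv : Measurable v) {ε : ℝ} (hε : 0 < ε) :
    interactionEnergy (outerDilation v ε) (Ioi 1) (Ioi 1) =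
      interactionEnergy v (Ioi 0) (Ioi 0) := by
  have hpre : {t | -ε + ε * t ∈ Ioi 0} = Ioi 1 := by
    ext t
    simp [hε]
  rw [← interactionEnergy_comp_affine hv hε (-ε) measurableSet_Ioi measurableSet_Ioi, hpre]
  refine interactionEnergy_congr measurableSet_Ioi measurableSet_Ioi fun p hp q hq => ?_
  rw [outerDilation_of_one_lt v ε hp, outerDilation_of_one_lt v ε hq]
  ring_nf

theorem interactionEnergy_outerDilation_one_Ioc_Ioi {v : ℝ → ℝ} (hv : Measurable v) :
    interactionEnergy (outerDilation v 1) (Ioc 0 1) (Ioi 1) =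
      ∫⁻ t in Ioi 0, ENNReal.ofReal (v t ^ 2 / (t * (1 + t))) := by
  have hpre : {t : ℝ | 1 + 1 * t ∈ Ioi 1} = Ioi 0 := by
    ext t
    simp
  rw [interactionEnergy_comm,
    interactionEnergy_eq_lintegral_lintegral (measurable_outerDilation hv 1),
    setLIntegral_eq_ofReal_mul_comp_affine one_pos 1 measurableSet_Ioi, hpre,
    ENNReal.ofReal_one, one_mul]
  refine setLIntegral_congr_fun measurableSet_Ioi fun t ht => ?_
  have ht' : 0 < t := ht
  calc ∫⁻ p in Ioc 0 1, diffQuotSq (outerDilation v 1) (1 + 1 * t, p)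
      = ∫⁻ p in Ioc 0 1, ENNReal.ofReal (v t ^ 2) * ENNReal.ofReal ((1 + t - 1 * p) ^ 2)⁻¹ :=
        setLIntegral_congr_fun measurableSet_Ioc fun p hp => by
          simp only [diffQuotSq_eq_mul, outerDilation_of_le_one v 1 hp.2, one_mul, sub_zero,
            outerDilation_of_one_lt v 1 (lt_add_of_pos_right 1 ht'), add_sub_cancel_left]
    _ = ENNReal.ofReal (v t ^ 2 / (t * (1 + t))) := by
        rw [lintegral_const_mul' _ _ ENNReal.ofReal_ne_top, lintegral_Ioc_inv_sub_mul_sq zero_le_one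
          fun p hp => by linarith [hp.2], ← ENNReal.ofReal_mul (sq_nonneg _)]
        ring_nf

theorem diffQuotSq_sub_le (u v : ℝ → ℝ) (z : ℝ × ℝ) :
    diffQuotSq (u - v) z ≤ 2 * (diffQuotSq u z + diffQuotSq v z) := by
  rw [diffQuotSq, diffQuotSq, diffQuotSq, ← ENNReal.ofReal_add (by positivity) (by positivity),
    ← ENNReal.ofReal_ofNat 2, ← ENNReal.ofReal_mul zero_le_two, ← add_div, ← mul_div_assoc]
  refine ENNReal.ofReal_le_ofReal (div_le_div_of_nonneg_right ?_ (sq_nonneg _))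
  simp only [Pi.sub_apply]
  linarith [sq_nonneg (u z.1 - u z.2 + (v z.1 - v z.2))]

theorem tendsto_interactionEnergy_sub_outerDilation_Ioc_Ioi {u v : ℝ → ℝ} (hu : Measurable u)
    (hv : Measurable v) (hmono : MonotoneOn (fun t => |v t|) (Ioi 0))
    (hlim : Tendsto v (𝓝[>] 0) (𝓝 0)) (hu_fin : interactionEnergy u (Ioc 0 1) (Ioi 1) ≠ ⊤)
    (hv_fin : interactionEnergy (outerDilation v 1) (Ioc 0 1) (Ioi 1) ≠ ⊤) :
    Tendsto (fun ε => interactionEnergy (u - outerDilation v ε) (Ioc 0 1) (Ioi 1)) (𝓝[>] 0)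
      (𝓝 (interactionEnergy u (Ioc 0 1) (Ioi 1))) := by
  have hmeas := measurable_diffQuotSq hu
  refine tendsto_lintegral_filter_of_dominated_convergence
    (fun z => 2 * (diffQuotSq u z + diffQuotSq (outerDilation v 1) z))
    (.of_forall fun ε => measurable_diffQuotSq (hu.sub (measurable_outerDilation hv ε)))
    ?_ ?_ (.of_forall fun z => ?_)
  · filter_upwards [Ioc_mem_nhdsGT one_pos] with ε hε
    refine (ae_restrict_mem (measurableSet_Ioc.prod measurableSet_Ioi)).mono fun z hz => ?_
    have hdom : diffQuotSq (outerDilation v ε) z ≤ diffQuotSq (outerDilation v 1) z := by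
      refine ENNReal.ofReal_le_ofReal (div_le_div_of_nonneg_right ?_ (sq_nonneg _))
      rw [outerDilation_of_le_one v _ hz.1.2, outerDilation_of_le_one v _ hz.1.2, sq_le_sq,
        zero_sub, zero_sub, abs_neg, abs_neg]
      exact abs_outerDilation_le hmono hε z.2
    exact (diffQuotSq_sub_le u _ z).trans (by gcongr)
  · rw [lintegral_const_mul' _ _ ENNReal.ofNat_ne_top, lintegral_add_left hmeas]
    exact ENNReal.mul_ne_top ENNReal.ofNat_ne_top (ENNReal.add_ne_top.2 ⟨hu_fin, hv_fin⟩)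
  · have hsub (t : ℝ) : Tendsto (fun ε => (u - outerDilation v ε) t) (𝓝[>] 0) (𝓝 (u t)) := by
      simpa using (tendsto_outerDilation hlim t).const_sub (u t)
    exact ENNReal.tendsto_ofReal ((((hsub z.1).sub (hsub z.2)).pow 2).div_const _)

theorem tendsto_interactionEnergy_sub_outerDilation {u v : ℝ → ℝ} {c : ℝ} (hu : Measurable u)
    (hv : Measurable v) (huc : ∀ t ∈ Ioi 1, u t = c) (hmono : MonotoneOn (fun t => |v t|) (Ioi 0))
    (hlim : Tendsto v (𝓝[>] 0) (𝓝 0)) (hu_fin : interactionEnergy u (Ioc 0 1) (Ioi 1) ≠ ⊤)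
    (hv_fin : interactionEnergy (outerDilation v 1) (Ioc 0 1) (Ioi 1) ≠ ⊤) :
    Tendsto (fun ε => interactionEnergy (u - outerDilation v ε) (Ioi 0) (Ioi 0)) (𝓝[>] 0)
      (𝓝 (interactionEnergy u (Ioi 0) (Ioi 0) + interactionEnergy v (Ioi 0) (Ioi 0))) := by
  have hinner (ε : ℝ) : interactionEnergy (u - outerDilation v ε) (Ioc 0 1) (Ioc 0 1) =
      interactionEnergy u (Ioc 0 1) (Ioc 0 1) :=
    interactionEnergy_congr measurableSet_Ioc measurableSet_Ioc fun p hp q hq => by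
      simp only [Pi.sub_apply, outerDilation_of_le_one v ε hp.2, outerDilation_of_le_one v ε hq.2,
        sub_zero]
  have houter (ε : ℝ) (hε : 0 < ε) : interactionEnergy (u - outerDilation v ε) (Ioi 1) (Ioi 1) =
      interactionEnergy v (Ioi 0) (Ioi 0) := by
    rw [← interactionEnergy_outerDilation_Ioi hv hε]
    refine interactionEnergy_congr measurableSet_Ioi measurableSet_Ioi fun p hp q hq => ?_
    simp only [Pi.sub_apply, huc p hp, huc q hq]
    ring
  have hflat : interactionEnergy u (Ioi 1) (Ioi 1) = 0 :=
    interactionEnergy_eq_zero_of_eq_const measurableSet_Ioi huc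
  have hcross := ENNReal.Tendsto.const_mul (a := 2)
    (tendsto_interactionEnergy_sub_outerDilation_Ioc_Ioi hu hv hmono hlim hu_fin hv_fin)
    (Or.inr ENNReal.ofNat_ne_top)
  rw [interactionEnergy_Ioi u zero_le_one, hflat, add_zero, add_right_comm]
  refine (hcross.const_add _).congr' ?_
  filter_upwards [self_mem_nhdsWithin] with ε hε
  rw [interactionEnergy_Ioi (u - outerDilation v ε) zero_le_one, hinner, houter ε hε]

theorem lintegral_truncPow_sq_div_ne_top {p : ℝ} (hp : 0 < p) :
    ∫⁻ t in Ioi 0, ENNReal.ofReal (truncPow p t ^ 2 / (t * (1 + t))) ≠ ⊤ := by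
  rw [← Ioc_union_Ioi_eq_Ioi zero_le_one,
    lintegral_union measurableSet_Ioi (Ioc_disjoint_Ioi le_rfl), ENNReal.add_ne_top]
  constructor
  · have hint : IntervalIntegrable (fun t : ℝ => t ^ (2 * p - 1)) volume 0 1 :=
      intervalIntegral.intervalIntegrable_rpow' (by linarith)
    refine ne_top_of_le_ne_top (setLIntegral_Ioc_ofReal zero_le_one hint
      (fun t ht => Real.rpow_nonneg ht.1.le _) ▸ ENNReal.ofReal_ne_top)
      (setLIntegral_mono' measurableSet_Ioc fun t ht => ENNReal.ofReal_le_ofReal ?_)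
    rw [truncPow_of_le_one p ht.2, Real.rpow_sub_one ht.1.ne', mul_comm 2 p,
      Real.rpow_mul ht.1.le, Real.rpow_two]
    have := ht.1
    gcongr
    exact le_mul_of_one_le_right this.le (by linarith)
  · refine ne_top_of_le_ne_top (lintegral_Ioi_inv_sub_sq zero_lt_one ▸ ENNReal.ofReal_ne_top)
      (setLIntegral_mono' measurableSet_Ioi fun t ht => ENNReal.ofReal_le_ofReal ?_)
    have ht' : 0 < t := one_pos.trans ht
    rw [truncPow_of_one_le p (le_of_lt ht), one_pow, one_div, zero_sub, neg_sq]
    gcongr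
    linarith

/-! ### Reduction of the radial form on `ℝ³` to the half-line -/

theorem lintegral_Ioi_mul_comp_add_sq (c : ℝ) (f : ℝ → ℝ≥0∞) :
    ∫⁻ r in Ioi 0, ENNReal.ofReal (2 * r) * f (c + r ^ 2) = ∫⁻ q in Ioi c, f q := by
  have himage : (fun r : ℝ => c + r ^ 2) '' Ioi 0 = Ioi c := by
    ext q
    refine ⟨?_, fun hq => ⟨√(q - c), Real.sqrt_pos.2 (sub_pos.2 hq), ?_⟩⟩
    · rintro ⟨r, hr, rfl⟩
      exact lt_add_of_pos_right c (pow_pos hr 2)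
    · simp only [Real.sq_sqrt (sub_nonneg.2 (le_of_lt hq)), add_sub_cancel]
  have hderiv (r : ℝ) : HasDerivAt (fun r => c + r ^ 2) (2 * r) r := by
    simpa using (hasDerivAt_pow 2 r).const_add c
  have hinj : InjOn (fun r : ℝ => c + r ^ 2) (Ioi 0) := fun r hr s hs h =>
    (pow_left_inj₀ (le_of_lt hr) (le_of_lt hs) two_ne_zero).1 (add_left_cancel h)
  rw [← himage, lintegral_image_eq_lintegral_abs_deriv_mul measurableSet_Ioi
    (fun r _ => (hderiv r).hasDerivWithinAt) hinj]
  refine setLIntegral_congr_fun measurableSet_Ioi fun r hr => ?_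
  simp only [abs_of_pos (mul_pos two_pos (mem_Ioi.1 hr))]

theorem lintegral_prod_comp_add_sq_add_sq (c : ℝ) {f : ℝ → ℝ≥0∞} (hf : Measurable f) :
    ∫⁻ p : ℝ × ℝ, f (c + (p.1 ^ 2 + p.2 ^ 2)) = ENNReal.ofReal π * ∫⁻ q in Ioi c, f q := by
  have hradius (p : ℝ × ℝ) :
      (polarCoord.symm p).1 ^ 2 + (polarCoord.symm p).2 ^ 2 = p.1 ^ 2 := by
    simp only [polarCoord_symm_apply, mul_pow, ← mul_add, Real.cos_sq_add_sin_sq, mul_one]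
  calc ∫⁻ p : ℝ × ℝ, f (c + (p.1 ^ 2 + p.2 ^ 2))
      = ∫⁻ p in Ioi 0 ×ˢ Ioo (-π) π, ENNReal.ofReal p.1 * f (c + p.1 ^ 2) := by
        simp only [← lintegral_comp_polarCoord_symm, polarCoord_target, hradius, smul_eq_mul]
    _ = ∫⁻ r in Ioi 0, ENNReal.ofReal r * f (c + r ^ 2) * ENNReal.ofReal (2 * π) := by
        rw [Measure.volume_eq_prod, setLIntegral_prod _ (by fun_prop)]
        simp only [setLIntegral_const, Real.volume_Ioo, sub_neg_eq_add, two_mul]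
    _ = ENNReal.ofReal π * ∫⁻ r in Ioi 0, ENNReal.ofReal (2 * r) * f (c + r ^ 2) := by
        rw [← lintegral_const_mul' _ _ ENNReal.ofReal_ne_top]
        refine lintegral_congr fun r => ?_
        rw [ENNReal.ofReal_mul zero_le_two, ENNReal.ofReal_mul zero_le_two]
        ring
    _ = ENNReal.ofReal π * ∫⁻ q in Ioi c, f q := by rw [lintegral_Ioi_mul_comp_add_sq]

theorem lintegral_comp_inner_norm_eq_of_norm_eq {E : Type*} [NormedAddCommGroup E]
    [InnerProductSpace ℝ E] [FiniteDimensional ℝ E] [MeasurableSpace E] [BorelSpace E] {x x' : E}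
    (hx : ‖x‖ = ‖x'‖) (F : ℝ → ℝ → ℝ≥0∞) :
    ∫⁻ y : E, F (inner ℝ x y) ‖y‖ = ∫⁻ y : E, F (inner ℝ x' y) ‖y‖ := by
  set e := (Submodule.span ℝ {x' - x})ᗮ.reflection
  have he : e x' = x := Submodule.reflection_sub hx.symm
  rw [← e.measurePreserving.lintegral_comp_emb e.toHomeomorph.measurableEmbedding]
  simp only [e.norm_map, ← he, e.inner_map_map]

theorem lintegral_euclideanSpace_three_comp_coord_norm_sq {F : ℝ → ℝ → ℝ≥0∞}
    (hF : Measurable (Function.uncurry F)) :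
    ∫⁻ y : EuclideanSpace ℝ (Fin 3), F (y 0) (‖y‖ ^ 2) =
      ∫⁻ z, ∫⁻ p : ℝ × ℝ, F z (z ^ 2 + (p.1 ^ 2 + p.2 ^ 2)) := by
  have hF' {X : Type} [MeasurableSpace X] {a b : X → ℝ} (ha : Measurable a) (hb : Measurable b) :
      Measurable fun x => F (a x) (b x) := hF.comp (ha.prodMk hb)
  have hplane (z : ℝ) : ∫⁻ p : ℝ × ℝ, F z (z ^ 2 + (p.1 ^ 2 + p.2 ^ 2)) =
      ∫⁻ v : Fin 2 → ℝ, F z (z ^ 2 + (v 0 ^ 2 + v 1 ^ 2)) :=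
    ((volume_preserving_finTwoArrow ℝ).lintegral_comp
      (f := fun p : ℝ × ℝ => F z (z ^ 2 + (p.1 ^ 2 + p.2 ^ 2)))
      (hF' (by fun_prop) (by fun_prop))).symm
  have hprod : Measurable fun p : ℝ × (Fin 2 → ℝ) => F p.1 (p.1 ^ 2 + (p.2 0 ^ 2 + p.2 1 ^ 2)) :=
    hF' (by fun_prop) (by fun_prop)
  simp only [hplane]
  rw [← lintegral_prod _ hprod.aemeasurable, ← Measure.volume_eq_prod,
    ← (volume_preserving_piFinSuccAbove (fun _ : Fin 3 => ℝ) 0).lintegral_comp hprod,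
    ← (PiLp.volume_preserving_toLp (Fin 3)).lintegral_comp (hF' (by fun_prop) (by fun_prop))]
  refine lintegral_congr fun v => ?_
  rw [EuclideanSpace.real_norm_sq_eq, Fin.sum_univ_three, add_assoc]
  rfl

theorem lintegral_lintegral_Ioi_sq {F : ℝ → ℝ → ℝ≥0∞}
    (hF : Measurable (Function.uncurry F)) :
    ∫⁻ z, ∫⁻ q in Ioi (z ^ 2), F z q = ∫⁻ q in Ioi 0, ∫⁻ z in Ioc (-√q) (√q), F z q := by
  have hmeas : Measurable (Function.uncurry fun z q => (Ioi (z ^ 2)).indicator (F z) q) :=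
    hF.indicator (measurableSet_lt (f := fun p : ℝ × ℝ => p.1 ^ 2) (by fun_prop) measurable_snd)
  simp only [← lintegral_indicator measurableSet_Ioi]
  rw [lintegral_lintegral_swap hmeas.aemeasurable]
  refine lintegral_congr fun q => ?_
  have hslice : (fun z => (Ioi (z ^ 2)).indicator (F z) q) =
      (Ioo (-√q) (√q)).indicator fun z => F z q := by
    ext z
    simp only [indicator, mem_Ioi, mem_Ioo, Real.sq_lt]
  rw [hslice, lintegral_indicator measurableSet_Ioo, restrict_Ioo_eq_restrict_Ioc]
  rcases le_or_gt q 0 with hq | hq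
  · simp [hq, Real.sqrt_eq_zero_of_nonpos hq]
  · rw [indicator_of_mem (mem_Ioi.2 hq)]

theorem lintegral_euclideanSpace_three_comp_inner_norm_sq {F : ℝ → ℝ → ℝ≥0∞}
    (hF : Measurable (Function.uncurry F)) (x : EuclideanSpace ℝ (Fin 3)) :
    ∫⁻ y : EuclideanSpace ℝ (Fin 3), F (inner ℝ x y) (‖y‖ ^ 2) =
      ENNReal.ofReal π * ∫⁻ q in Ioi 0, ∫⁻ z in Ioc (-√q) (√q), F (‖x‖ * z) q := by
  have hscaled : Measurable (Function.uncurry fun z q => F (‖x‖ * z) q) :=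
    hF.comp (g := Function.uncurry F) (f := fun p : ℝ × ℝ => (‖x‖ * p.1, p.2)) (by fun_prop)
  have haxis (y : EuclideanSpace ℝ (Fin 3)) :
      inner ℝ (EuclideanSpace.single (0 : Fin 3) ‖x‖) y = ‖x‖ * y 0 := by
    simp [EuclideanSpace.inner_single_left]
  rw [lintegral_comp_inner_norm_eq_of_norm_eq (x' := EuclideanSpace.single 0 ‖x‖) (by simp)
    fun t r => F t (r ^ 2)]
  simp only [haxis]
  rw [lintegral_euclideanSpace_three_comp_coord_norm_sq hscaled,
    ← lintegral_lintegral_Ioi_sq hscaled,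
    ← lintegral_const_mul' _ _ ENNReal.ofReal_ne_top]
  exact lintegral_congr fun z =>
    lintegral_prod_comp_add_sq_add_sq _ (hscaled.comp measurable_prodMk_left)

theorem lintegral_euclideanSpace_three_comp_norm_sq {g : ℝ → ℝ≥0∞} (hg : Measurable g) :
    ∫⁻ y : EuclideanSpace ℝ (Fin 3), g (‖y‖ ^ 2) =
      ∫⁻ q in Ioi 0, ENNReal.ofReal (2 * π * √q) * g q := by
  rw [lintegral_euclideanSpace_three_comp_inner_norm_sq (F := fun _ q => g q)
    (hg.comp measurable_snd) 0, ← lintegral_const_mul' _ _ ENNReal.ofReal_ne_top]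
  refine lintegral_congr fun q => ?_
  rw [setLIntegral_const, Real.volume_Ioc, mul_left_comm, ← ENNReal.ofReal_mul Real.pi_pos.le,
    mul_comm]
  ring_nf

theorem lintegral_Ioc_sqrt_inv_sub_mul_sq {r q : ℝ} (hr : 0 < r) (hq : 0 < q) (hne : q ≠ r ^ 2) :
    ∫⁻ z in Ioc (-√q) (√q), ENNReal.ofReal ((r ^ 2 + q - 2 * r * z) ^ 2)⁻¹ =
      ENNReal.ofReal (2 * √q / (r ^ 2 - q) ^ 2) := by
  have hs : 0 < √q := Real.sqrt_pos.2 hq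
  have hsq : √q ^ 2 = q := Real.sq_sqrt hq.le
  have hrs : r - √q ≠ 0 := fun h => hne (by rw [sub_eq_zero.1 h, hsq])
  have hpos : ∀ z ∈ Icc (-√q) (√q), r ^ 2 + q - 2 * r * z ≠ 0 := fun z hz => by
    have : 0 < (r - √q) ^ 2 := by positivity
    nlinarith [hz.2]
  rw [lintegral_Ioc_inv_sub_mul_sq (by linarith) hpos]
  congr 2
  · ring
  · linear_combination (-4 * r ^ 2) * hsq

theorem lintegral_euclideanSpace_three_mul_inv_norm_sub_pow_four {g : ℝ → ℝ≥0∞}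
    (hg : Measurable g) {x : EuclideanSpace ℝ (Fin 3)} (hx : x ≠ 0) :
    ∫⁻ y : EuclideanSpace ℝ (Fin 3), g (‖y‖ ^ 2) * ENNReal.ofReal (‖x - y‖ ^ 4)⁻¹ =
      ∫⁻ q in Ioi 0, ENNReal.ofReal (2 * π * √q) *
        (g q * ENNReal.ofReal ((‖x‖ ^ 2 - q) ^ 2)⁻¹) := by
  have hnorm (y : EuclideanSpace ℝ (Fin 3)) :
      ‖x - y‖ ^ 4 = (‖x‖ ^ 2 + ‖y‖ ^ 2 - 2 * inner ℝ x y) ^ 2 := by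
    rw [← sub_add_eq_add_sub, ← norm_sub_sq_real, ← pow_mul]
  have hF : Measurable (Function.uncurry fun t q =>
      g q * ENNReal.ofReal ((‖x‖ ^ 2 + q - 2 * t) ^ 2)⁻¹) := by
    unfold Function.uncurry
    fun_prop
  simp only [hnorm]
  rw [lintegral_euclideanSpace_three_comp_inner_norm_sq hF,
    ← lintegral_const_mul' _ _ ENNReal.ofReal_ne_top]
  refine lintegral_congr_ae ?_
  filter_upwards [ae_restrict_mem measurableSet_Ioi,
    ae_restrict_of_ae (Measure.ae_ne volume (‖x‖ ^ 2))] with q hq hqx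
  simp only [← mul_assoc]
  rw [lintegral_const_mul _ (by fun_prop),
    lintegral_Ioc_sqrt_inv_sub_mul_sq (norm_pos_iff.2 hx) hq hqx, mul_left_comm,
    ← ENNReal.ofReal_mul Real.pi_pos.le, mul_comm (ENNReal.ofReal _) (g q), mul_assoc,
    ← ENNReal.ofReal_mul (by positivity)]
  congr 2
  ring

theorem lintegral_euclideanSpace_three_mul_inv_norm_sub_pow_four_mul_inv_norm {g : ℝ → ℝ≥0∞}
    (hg : Measurable g) (x : EuclideanSpace ℝ (Fin 3)) :
    ∫⁻ y : EuclideanSpace ℝ (Fin 3), g (‖y‖ ^ 2) *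
        ENNReal.ofReal ((‖x - y‖ ^ 4)⁻¹ * ‖x‖⁻¹ * ‖y‖⁻¹) =
      ENNReal.ofReal (2 * π * ‖x‖⁻¹) *
        ∫⁻ q in Ioi 0, g q * ENNReal.ofReal ((‖x‖ ^ 2 - q) ^ 2)⁻¹ := by
  rcases eq_or_ne x 0 with rfl | hx
  · simp
  have hsplit (y : EuclideanSpace ℝ (Fin 3)) :
      g (‖y‖ ^ 2) * ENNReal.ofReal ((‖x - y‖ ^ 4)⁻¹ * ‖x‖⁻¹ * ‖y‖⁻¹) =
      g (‖y‖ ^ 2) * ENNReal.ofReal (‖x‖⁻¹ * (√(‖y‖ ^ 2))⁻¹) * ENNReal.ofReal (‖x - y‖ ^ 4)⁻¹ := by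
    rw [Real.sqrt_sq (norm_nonneg y), mul_assoc (g _), ← ENNReal.ofReal_mul (by positivity),
      mul_assoc, mul_comm (‖x - y‖ ^ 4)⁻¹]
  simp only [hsplit]
  rw [lintegral_euclideanSpace_three_mul_inv_norm_sub_pow_four
      (g := fun q => g q * ENNReal.ofReal (‖x‖⁻¹ * (√q)⁻¹)) (by fun_prop) hx,
    ← lintegral_const_mul' _ _ ENNReal.ofReal_ne_top]
  refine setLIntegral_congr_fun measurableSet_Ioi fun q hq => ?_
  have hs : √q ≠ 0 := (Real.sqrt_pos.2 hq).ne'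
  have hweight : ENNReal.ofReal (2 * π * √q) * ENNReal.ofReal (‖x‖⁻¹ * (√q)⁻¹) =
      ENNReal.ofReal (2 * π * ‖x‖⁻¹) := by
    rw [← ENNReal.ofReal_mul (by positivity)]
    congr 1
    field_simp
  rw [← hweight]
  ring

theorem lintegral_lintegral_comp_norm_sq_mul_inv_norm_sub_pow_four {k : ℝ × ℝ → ℝ≥0∞}
    (hk : Measurable k) :
    ∫⁻ x : EuclideanSpace ℝ (Fin 3), ∫⁻ y : EuclideanSpace ℝ (Fin 3), k (‖x‖ ^ 2, ‖y‖ ^ 2) *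
      ENNReal.ofReal ((‖x - y‖ ^ 4)⁻¹ * ‖x‖⁻¹ * ‖y‖⁻¹) =
    ENNReal.ofReal (4 * π ^ 2) *
      ∫⁻ p in Ioi 0, ∫⁻ q in Ioi 0, k (p, q) * ENNReal.ofReal ((p - q) ^ 2)⁻¹ := by
  have hG : Measurable fun p => ∫⁻ q in Ioi 0, k (p, q) * ENNReal.ofReal ((p - q) ^ 2)⁻¹ :=
    Measurable.lintegral_prod_right'
      (f := fun z : ℝ × ℝ => k z * ENNReal.ofReal ((z.1 - z.2) ^ 2)⁻¹) (by fun_prop)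
  have hinner (x : EuclideanSpace ℝ (Fin 3)) :
      ∫⁻ y : EuclideanSpace ℝ (Fin 3), k (‖x‖ ^ 2, ‖y‖ ^ 2) *
        ENNReal.ofReal ((‖x - y‖ ^ 4)⁻¹ * ‖x‖⁻¹ * ‖y‖⁻¹) =
      ENNReal.ofReal (2 * π * (√(‖x‖ ^ 2))⁻¹) *
        ∫⁻ q in Ioi 0, k (‖x‖ ^ 2, q) * ENNReal.ofReal ((‖x‖ ^ 2 - q) ^ 2)⁻¹ := by
    rw [Real.sqrt_sq (norm_nonneg x)]
    exact lintegral_euclideanSpace_three_mul_inv_norm_sub_pow_four_mul_inv_norm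
      (hk.comp measurable_prodMk_left) x
  simp only [hinner]
  rw [lintegral_euclideanSpace_three_comp_norm_sq (g := fun p => ENNReal.ofReal (2 * π * (√p)⁻¹) *
      ∫⁻ q in Ioi 0, k (p, q) * ENNReal.ofReal ((p - q) ^ 2)⁻¹)
      ((Measurable.ennreal_ofReal (by fun_prop)).mul hG),
    ← lintegral_const_mul' _ _ ENNReal.ofReal_ne_top]
  refine setLIntegral_congr_fun measurableSet_Ioi fun p hp => ?_
  have hs : √p ≠ 0 := (Real.sqrt_pos.2 hp).ne'
  rw [← mul_assoc, ← ENNReal.ofReal_mul (by positivity)]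
  congr 2
  field_simp
  ring

theorem integral_integral_eq_toReal_lintegral {X : Type*} [MeasurableSpace X] {μ : Measure X}
    [SFinite μ] {I : X → X → ℝ} (hI : Measurable (Function.uncurry I)) (hI₀ : ∀ x y, 0 ≤ I x y)
    (hfin : ∫⁻ x, ∫⁻ y, ENNReal.ofReal (I x y) ∂μ ∂μ ≠ ⊤) :
    ∫ x, ∫ y, I x y ∂μ ∂μ = (∫⁻ x, ∫⁻ y, ENNReal.ofReal (I x y) ∂μ ∂μ).toReal := by
  have hmeas : Measurable fun x => ∫⁻ y, ENNReal.ofReal (I x y) ∂μ :=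
    hI.ennreal_ofReal.lintegral_prod_right'
  rw [← integral_toReal hmeas.aemeasurable (ae_lt_top hmeas hfin)]
  exact integral_congr_ae (ae_of_all _ fun x => integral_eq_lintegral_of_nonneg_ae
    (ae_of_all _ (hI₀ x)) (hI.comp measurable_prodMk_left).aestronglyMeasurable)

theorem Hform_eq_two_mul_interactionEnergy {f : EuclideanSpace ℝ (Fin 3) → ℝ} {w : ℝ → ℝ}
    (hw : Measurable w) (hf : ∀ x, x ≠ 0 → ‖x‖ * f x = w (‖x‖ ^ 2))
    (hfin : interactionEnergy w (Ioi 0) (Ioi 0) ≠ ⊤) :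
    Hform f = 2 * (interactionEnergy w (Ioi 0) (Ioi 0)).toReal := by
  have hradial (x y : EuclideanSpace ℝ (Fin 3)) :
      (‖x‖ * f x - ‖y‖ * f y) ^ 2 / ‖x - y‖ ^ 4 * ‖x‖⁻¹ * ‖y‖⁻¹ =
      (w (‖x‖ ^ 2) - w (‖y‖ ^ 2)) ^ 2 * ((‖x - y‖ ^ 4)⁻¹ * ‖x‖⁻¹ * ‖y‖⁻¹) := by
    rcases eq_or_ne x 0 with rfl | hx
    · simp
    rcases eq_or_ne y 0 with rfl | hy
    · simp
    rw [hf x hx, hf y hy]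
    ring
  have henergy : ∫⁻ x : EuclideanSpace ℝ (Fin 3), ∫⁻ y : EuclideanSpace ℝ (Fin 3),
      ENNReal.ofReal ((w (‖x‖ ^ 2) - w (‖y‖ ^ 2)) ^ 2 * ((‖x - y‖ ^ 4)⁻¹ * ‖x‖⁻¹ * ‖y‖⁻¹)) =
      ENNReal.ofReal (4 * π ^ 2) * interactionEnergy w (Ioi 0) (Ioi 0) := by
    simp only [ENNReal.ofReal_mul (sq_nonneg (w _ - w _)),
      interactionEnergy_eq_lintegral_lintegral hw, diffQuotSq_eq_mul]
    exact lintegral_lintegral_comp_norm_sq_mul_inv_norm_sub_pow_four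
      (k := fun z => ENNReal.ofReal ((w z.1 - w z.2) ^ 2)) (by fun_prop)
  simp only [Hform, hradial]
  rw [integral_integral_eq_toReal_lintegral (by unfold Function.uncurry; fun_prop)
    (fun x y => by positivity)
    (by rw [henergy]; exact ENNReal.mul_ne_top ENNReal.ofReal_ne_top hfin), henergy,
    ENNReal.toReal_mul, ENNReal.toReal_ofReal (by positivity)]
  field_simp
  ring

/-! ### The trial function -/

theorem norm_mul_psiTrial {α δ ε : ℝ} (hε : 0 < ε) {x : EuclideanSpace ℝ (Fin 3)} (hx : x ≠ 0) :
    ‖x‖ * psiTrial α δ ε x =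
      (truncPow ((1 - α) / 2) - outerDilation (truncPow δ) ε) (‖x‖ ^ 2) := by
  have hr : 0 < ‖x‖ := norm_pos_iff.2 hx
  rw [Pi.sub_apply, psiTrial]
  split_ifs with h h'
  · have hsq : ‖x‖ ^ 2 ≤ 1 := pow_le_one₀ hr.le h
    rw [truncPow_of_le_one _ hsq, outerDilation_of_le_one _ _ hsq, sub_zero,
      ← Real.rpow_natCast_mul hr.le, Nat.cast_ofNat, mul_div_cancel₀ _ two_ne_zero,
      sub_eq_add_neg, Real.rpow_add hr, Real.rpow_one]
  all_goals
    have hsq : 1 < ‖x‖ ^ 2 := one_lt_pow₀ (not_le.1 h) two_ne_zero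
    have hcut : ε * (‖x‖ ^ 2 - 1) ≤ 1 ↔ ‖x‖ ^ 2 ≤ 1 + 1 / ε := by
      rw [← sub_le_iff_le_add', le_div_iff₀ hε, mul_comm]
    rw [truncPow_of_one_le _ hsq.le, outerDilation_of_one_lt _ _ hsq]
  · rw [truncPow_of_le_one _ (hcut.2 h'), Real.mul_rpow hε.le (sub_pos.2 hsq).le,
      mul_inv_cancel_left₀ hr.ne']
  · rw [truncPow_of_one_le _ (le_of_not_ge (mt hcut.1 h')), sub_self, mul_zero]

theorem monotoneOn_abs_truncPow {p : ℝ} (hp : 0 ≤ p) :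
    MonotoneOn (fun t => |truncPow p t|) (Ioi 0) := fun s hs t ht hst => by
  have hs' : 0 ≤ min 1 s := le_min zero_le_one (le_of_lt hs)
  have ht' : 0 ≤ min 1 t := le_min zero_le_one (le_of_lt ht)
  simp only [truncPow, abs_of_nonneg (Real.rpow_nonneg hs' p),
    abs_of_nonneg (Real.rpow_nonneg ht' p)]
  exact Real.rpow_le_rpow hs' (min_le_min_left 1 hst) hp

theorem tendsto_truncPow_zero {p : ℝ} (hp : 0 < p) : Tendsto (truncPow p) (𝓝[>] 0) (𝓝 0) := by
  refine (Continuous.tendsto' ?_ 0 0 ?_).mono_left nhdsWithin_le_nhds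
  · exact (continuous_const.min continuous_id).rpow_const fun _ => Or.inr hp.le
  · rw [truncPow_of_le_one p zero_le_one, Real.zero_rpow hp.ne']

theorem tendsto_interactionEnergy_truncPow_sub_outerDilation {β δ : ℝ} (hβ : 0 ≤ β) (hδ : 0 < δ) :
    Tendsto (fun ε => interactionEnergy (truncPow β - outerDilation (truncPow δ) ε) (Ioi 0) (Ioi 0))
      (𝓝[>] 0) (𝓝 (interactionEnergy (truncPow β) (Ioi 0) (Ioi 0) +
        interactionEnergy (truncPow δ) (Ioi 0) (Ioi 0))) := by
  refine tendsto_interactionEnergy_sub_outerDilation (measurable_truncPow β)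
    (measurable_truncPow δ) (fun t ht => truncPow_of_one_le β (le_of_lt ht))
    (monotoneOn_abs_truncPow hδ.le) (tendsto_truncPow_zero hδ) ?_ ?_
  · rw [interactionEnergy_truncPow_Ioc_Ioi hβ]
    exact ENNReal.ofReal_ne_top
  · rw [interactionEnergy_outerDilation_one_Ioc_Ioi (measurable_truncPow δ)]
    exact lintegral_truncPow_sq_div_ne_top hδ

theorem Hform_trial_limit_general (α δ : ℝ) (hα : α ≤ 1) (hδ : 0 < δ) :
    Filter.Tendsto (fun ε => Hform (psiTrial α δ ε)) (nhdsWithin 0 (Set.Ioi 0))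
      (nhds (4 * (digamma (3 / 2 - α / 2) + digamma (1 + δ) - 2 * digamma 1))) := by
  have hβ : 0 ≤ (1 - α) / 2 := by linarith
  have hβ_fin := interactionEnergy_truncPow_ne_top hβ
  have hδ_fin := interactionEnergy_truncPow_ne_top hδ.le
  have hfin := ENNReal.add_ne_top.2 ⟨hβ_fin, hδ_fin⟩
  have henergy := tendsto_interactionEnergy_truncPow_sub_outerDilation hβ hδ
  have hreal := ((ENNReal.tendsto_toReal hfin).comp henergy).const_mul 2
  have hvalue : 4 * (digamma (3 / 2 - α / 2) + digamma (1 + δ) - 2 * digamma 1) =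
      2 * (interactionEnergy (truncPow ((1 - α) / 2)) (Ioi 0) (Ioi 0) +
        interactionEnergy (truncPow δ) (Ioi 0) (Ioi 0)).toReal := by
    rw [ENNReal.toReal_add hβ_fin hδ_fin, toReal_interactionEnergy_truncPow hβ,
      toReal_interactionEnergy_truncPow hδ.le]
    ring_nf
  rw [hvalue]
  refine hreal.congr' ?_
  filter_upwards [self_mem_nhdsWithin, henergy.eventually_ne hfin] with ε hε hε_fin
  exact (Hform_eq_two_mul_interactionEnergy
    ((measurable_truncPow _).sub (measurable_outerDilation (measurable_truncPow δ) ε))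
    (fun x hx => norm_mul_psiTrial hε hx) hε_fin).symm

/-- As `ε → 0+`, `H[ψ^{ε,δ}] → 4(ψ(3/2 − α/2) + ψ(1+δ) − 2ψ(1))`. -/
theorem Hform_trial_limit (α δ : ℝ) (hα0 : 0 < α) (hα1 : α < 1) (hδ : 0 < δ) :
    Filter.Tendsto (fun ε => Hform (psiTrial α δ ε)) (nhdsWithin 0 (Set.Ioi 0))
      (nhds (4 * (digamma (3 / 2 - α / 2) + digamma (1 + δ) - 2 * digamma 1))) :=
  Hform_trial_limit_general α δ hα1.le hδ
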